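/- Let U : ℝ^d → ℝ be three times continuously differentiable with all critical points nondegenerate. Fix H ∈ ℝ and let W₁ and W₂ be two disjoint connected components of {x ∈ ℝ^d : U(x) < H} whose closures intersect. Then cl(W₁) ∩ cl(W₂) = ∂W₁ ∩ ∂W₂, and every point σ ∈ cl(W₁) ∩ cl(W₂) is a saddle point of U with U(σ) = H. Moreover, for every such σ and all sufficiently small r > 0, the set A(σ,r) has exactly two connected components, namely A(σ,r) ∩ W₁ and A(σ,r) ∩ W₂. -/

import Mathlib

/-!
Why the theorem holds. A common closure point `σ` of `W₁` and `W₂` satisfies `U σ = H`: if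
`U σ < H`, a small ball around `σ` would lie in `{U < H}` and meet both components. Since the
`Wᵢ` are open and lie in `{U < H}`, such a `σ` is on both frontiers.

The rest is local at `σ`. If `∇U(σ) ≠ 0`, every point of `{U < H}` near `σ` can be pushed along a
descent direction into one fixed ball contained in `{U < H}`, so `W₁ = W₂`, which is impossible
(`fderiv_eq_zero_of_common`).

Hence `σ` is a nondegenerate critical point. The Morse lemma is not needed. Let `N` be the span of
the eigenvectors of the Hessian at `σ` with negative eigenvalue. By continuity of the second
derivative, on a whole ball around `σ` it is negative definite on `N` and nonnegative on `Nᗮ`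
(`LocalSplitting`, `exists_localSplitting`). So `U < U σ` on `σ + (N ∖ {0})`, `U ≥ U σ` on
`σ + Nᗮ`, and `U` is convex along the segment from `σ + a` to `σ + a + b` for `a ∈ N`, `b ∈ Nᗮ`;
if `σ + a + b` lies in `A(σ, r)` then `a ≠ 0` and `U < U σ` at both endpoints, hence on the whole
segment (`LocalSplitting.segment_subset`). Thus `A(σ, r)` is joined by segments to the punctured
ball of radius `r` in `σ + N`. This is empty if `dim N = 0`, connected if `dim N ≥ 2`, and
consists of two half-segments if `dim N = 1`. The first case contradicts `σ` being in the closure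
of `W₁`, the second contradicts the disjointness of `W₁` and `W₂`, and in the third the two pieces
of `A(σ, r)` have to lie in different components.
-/

/-- `T` has exactly two connected components, namely `S₁` and `S₂`. -/
def ExactlyTwoComponents {X : Type*} [TopologicalSpace X] (T S₁ S₂ : Set X) : Prop :=
  S₁.Nonempty ∧ S₂.Nonempty ∧ S₁ ≠ S₂ ∧
    (∀ x ∈ S₁, connectedComponentIn T x = S₁) ∧
    (∀ x ∈ S₂, connectedComponentIn T x = S₂) ∧
    ∀ x ∈ T, connectedComponentIn T x = S₁ ∨ connectedComponentIn T x = S₂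

/-- The Hessian matrix `∇²U(x)` of `U : ℝ^d → ℝ` at `x`, whose `(i, j)` entry is the second
derivative of `U` at `x` in the directions of the `i`-th and `j`-th coordinate vectors. -/
noncomputable def hessianMatrix {d : ℕ} (U : EuclideanSpace ℝ (Fin d) → ℝ)
    (x : EuclideanSpace ℝ (Fin d)) : Matrix (Fin d) (Fin d) ℝ :=
  fun i j =>
    iteratedFDeriv ℝ 2 U x ![EuclideanSpace.single i (1 : ℝ), EuclideanSpace.single j (1 : ℝ)]

/-- A saddle point of `U`: a nondegenerate critical point whose Hessian has exactly one
negative eigenvalue (counted with multiplicity). -/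
def IsSaddle {d : ℕ} (U : EuclideanSpace ℝ (Fin d) → ℝ)
    (σ : EuclideanSpace ℝ (Fin d)) : Prop :=
  gradient U σ = 0 ∧ IsUnit (hessianMatrix U σ) ∧
    ∃ h : (hessianMatrix U σ).IsHermitian,
      (Finset.univ.filter fun i => h.eigenvalues i < 0).card = 1

open Set Metric Topology

/-! ### Components and calculus along lines -/

/-- A connected subset of `F` meeting a component of `F` lies in that component. -/
theorem comp_absorb {X : Type*} [TopologicalSpace X] {F W S : Set X}
    (hW : ∃ x₀ ∈ F, W = connectedComponentIn F x₀) (hS : IsPreconnected S) (hSF : S ⊆ F)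
    (h : (S ∩ W).Nonempty) : S ⊆ W := by
  obtain ⟨x₀, -, rfl⟩ := hW
  obtain ⟨y, hyS, hyW⟩ := h
  rw [connectedComponentIn_eq hyW]
  exact hS.subset_connectedComponentIn hyS hSF

theorem exists_norm_sub_lt {X F : Type*} [PseudoMetricSpace X] [NormedAddCommGroup F] {f : X → F}
    (hf : Continuous f) (σ : X) {c : ℝ} (hc : 0 < c) : ∃ R > 0, ∀ x ∈ ball σ R, ‖f x - f σ‖ < c := by
  obtain ⟨R, hR, h⟩ := Metric.continuous_iff.1 hf σ c hc
  exact ⟨R, hR, fun x hx => by simpa [dist_eq_norm] using h x hx⟩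

section
variable {E : Type*} [NormedAddCommGroup E] [InnerProductSpace ℝ E]

theorem hasDerivAt_line {U : E → ℝ} (hU : ContDiff ℝ 2 U) (x v : E) (s : ℝ) :
    HasDerivAt (fun s : ℝ => U (x + s • v)) (fderiv ℝ U (x + s • v) v) s := by
  have h1 : HasDerivAt (fun s : ℝ => x + s • v) v s := by
    simpa using ((hasDerivAt_id s).smul_const v).const_add x
  have h2 := (hU.differentiable (by norm_num) (x + s • v)).hasFDerivAt
  exact h2.comp_hasDerivAt s h1

theorem hasDerivAt_line' {U : E → ℝ} (hU : ContDiff ℝ 2 U) (x v : E) (s : ℝ) :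
    HasDerivAt (fun s : ℝ => fderiv ℝ U (x + s • v) v)
      (fderiv ℝ (fderiv ℝ U) (x + s • v) v v) s := by
  have h1 : HasDerivAt (fun s : ℝ => x + s • v) v s := by
    simpa using ((hasDerivAt_id s).smul_const v).const_add x
  have h3 : ContDiff ℝ 1 (fderiv ℝ U) := hU.fderiv_right (by norm_num)
  have h2 := (h3.differentiable (by norm_num) (x + s • v)).hasFDerivAt
  have h4 : HasDerivAt (fun s : ℝ => fderiv ℝ U (x + s • v))
      (fderiv ℝ (fderiv ℝ U) (x + s • v) v) s := h2.comp_hasDerivAt s h1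
  have h5 := h4.clm_apply (hasDerivAt_const s v)
  simpa using h5

/-- Two applications of the mean value theorem at a critical point; the sign of `U (x + v) - U x` is
that of the second derivative in direction `v` somewhere on the segment. -/
theorem taylor_two {U : E → ℝ} (hU : ContDiff ℝ 2 U) {x : E} (hx : fderiv ℝ U x = 0) (v : E) :
    ∃ ξ ∈ Ioo (0 : ℝ) 1, ∃ η ∈ Ioo (0 : ℝ) 1,
      U (x + v) - U x = ξ * fderiv ℝ (fderiv ℝ U) (x + η • v) v v := by
  obtain ⟨ξ, hξ, h⟩ := exists_hasDerivAt_eq_slope _ _ zero_lt_one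
    (fun s _ => (hasDerivAt_line hU x v s).continuousAt.continuousWithinAt)
    (fun s _ => hasDerivAt_line hU x v s)
  obtain ⟨η, hη, h'⟩ := exists_hasDerivAt_eq_slope _ _ hξ.1
    (fun s _ => (hasDerivAt_line' hU x v s).continuousAt.continuousWithinAt)
    (fun s _ => hasDerivAt_line' hU x v s)
  refine ⟨ξ, hξ, η, ⟨hη.1, hη.2.trans hξ.2⟩, ?_⟩
  have := hξ.1.ne'
  simp [hx] at h h'
  rw [h', ← h]
  field_simp

/-- Convexity along a segment keeps it in an open sublevel set that contains its endpoints. -/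
theorem segment_sublevel {U : E → ℝ} (hU : ContDiff ℝ 2 U) {x v : E} {c : ℝ}
    (h : ∀ s ∈ Icc (0 : ℝ) 1, 0 ≤ fderiv ℝ (fderiv ℝ U) (x + s • v) v v)
    (h0 : U x < c) (h1 : U (x + v) < c) : ∀ s ∈ Icc (0 : ℝ) 1, U (x + s • v) < c := by
  intro s hs
  have hc : ConvexOn ℝ (Icc (0 : ℝ) 1) (fun s : ℝ => U (x + s • v)) :=
    convexOn_of_hasDerivWithinAt2_nonneg (convex_Icc 0 1)
      (fun s _ => (hasDerivAt_line hU x v s).continuousAt.continuousWithinAt)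
      (fun s _ => (hasDerivAt_line hU x v s).hasDerivWithinAt)
      (fun s _ => (hasDerivAt_line' hU x v s).hasDerivWithinAt)
      (fun s hs => h s (interior_subset hs))
  have := hc.le_on_segment (x := 0) (y := 1) (z := s) (by simp) (by simp)
    (by rwa [segment_eq_Icc zero_le_one])
  refine this.trans_lt (max_lt ?_ ?_) <;> simpa

/-- Uniform closeness of the quadratic forms of the second derivative near a point. -/
theorem exists_snd_fderiv_close {U : E → ℝ} (hU : ContDiff ℝ 2 U) (σ : E) {c : ℝ} (hc : 0 < c) :
    ∃ R > 0, ∀ x ∈ ball σ R, ∀ v, v ≠ 0 →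
      |fderiv ℝ (fderiv ℝ U) x v v - fderiv ℝ (fderiv ℝ U) σ v v| < c * ‖v‖ ^ 2 := by
  have hcont : Continuous (fderiv ℝ (fderiv ℝ U)) :=
    (hU.fderiv_right (m := 1) (by norm_num)).continuous_fderiv (by norm_num)
  obtain ⟨R, hR, hRc⟩ := exists_norm_sub_lt (F := E →L[ℝ] E →L[ℝ] ℝ) hcont σ hc
  refine ⟨R, hR, fun x hx v hv => ?_⟩
  have h1 := hRc x hx
  have h2 := (fderiv ℝ (fderiv ℝ U) x - fderiv ℝ (fderiv ℝ U) σ).le_opNorm₂ v v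
  rw [Real.norm_eq_abs] at h2
  have h3 := norm_pos_iff.2 hv
  calc _ ≤ _ := h2
    _ < c * ‖v‖ * ‖v‖ := by gcongr
    _ = _ := by ring

/-- A common closure point `σ` of two different components of `{U < U σ}` is a critical point:
otherwise nearby points of `{U < U σ}` can be moved along a descent direction into one fixed ball
inside this set. -/
theorem fderiv_eq_zero_of_common {U : E → ℝ} (hU : ContDiff ℝ 2 U) {σ : E} {W₁ W₂ : Set E}
    (hW₁ : ∃ x₀ ∈ {x | U x < U σ}, W₁ = connectedComponentIn {x | U x < U σ} x₀)
    (hW₂ : ∃ x₀ ∈ {x | U x < U σ}, W₂ = connectedComponentIn {x | U x < U σ} x₀)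
    (hdisj : Disjoint W₁ W₂) (h1 : σ ∈ closure W₁) (h2 : σ ∈ closure W₂) :
    fderiv ℝ U σ = 0 := by
  by_contra hne
  obtain ⟨v, hv⟩ : ∃ v, fderiv ℝ U σ v < 0 := by
    obtain ⟨v, hv⟩ := DFunLike.ne_iff.1 hne
    rcases lt_or_gt_of_ne hv with h | h
    · exact ⟨v, h⟩
    · exact ⟨-v, by simpa using h⟩
  have hcont : Continuous fun x => fderiv ℝ U x v :=
    (hU.continuous_fderiv (by norm_num)).clm_apply continuous_const
  obtain ⟨R, hR, hRv⟩ := Metric.isOpen_iff.1 (isOpen_lt hcont continuous_const) σ hv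
  -- moving along `v` strictly decreases `U` as long as the segment stays in the ball
  have hdec : ∀ x ∈ ball σ (R / 2), ∀ t : ℝ, 0 < t → t * ‖v‖ < R / 2 → U (x + t • v) < U x := by
    intro x hx t ht htv
    obtain ⟨ξ, hξ, h⟩ := exists_hasDerivAt_eq_slope _ _ ht
      (fun s _ => (hasDerivAt_line hU x v s).continuousAt.continuousWithinAt)
      (fun s _ => hasDerivAt_line hU x v s)
    have hmem : x + ξ • v ∈ ball σ R := by
      rw [mem_ball, dist_eq_norm] at hx ⊢
      have : ‖ξ • v‖ ≤ t * ‖v‖ := by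
        rw [norm_smul, Real.norm_of_nonneg hξ.1.le]
        gcongr
        exact hξ.2.le
      calc ‖x + ξ • v - σ‖ = ‖(x - σ) + ξ • v‖ := by congr 1; abel
        _ ≤ ‖x - σ‖ + ‖ξ • v‖ := norm_add_le _ _
        _ < R := by linarith
    have hneg : fderiv ℝ U (x + ξ • v) v < 0 := hRv hmem
    rw [h] at hneg
    simp only [zero_smul, add_zero, sub_zero] at hneg
    have := (div_lt_iff₀ ht).1 hneg
    linarith
  -- all points near `σ` are moved by the same vector `τ • v`, into a ball around `σ + τ • v`
  obtain ⟨τ, hτ, hτv⟩ : ∃ τ : ℝ, 0 < τ ∧ τ * ‖v‖ < R / 2 := by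
    refine ⟨R / 2 / (‖v‖ + 1), by positivity, ?_⟩
    rw [div_mul_eq_mul_div, div_lt_iff₀ (by positivity)]
    nlinarith
  have hlow := hdec σ (mem_ball_self (by positivity)) τ hτ hτv
  obtain ⟨ρ, hρ, hρU⟩ := Metric.isOpen_iff.1
    (isOpen_lt hU.continuous (continuous_const (y := U σ))) (σ + τ • v) hlow
  have key : ∀ W : Set E, (∃ x₀ ∈ {x | U x < U σ}, W = connectedComponentIn {x | U x < U σ} x₀) →
      σ ∈ closure W → σ + τ • v ∈ W := by
    intro W hW hσ
    obtain ⟨x, hxW, hx⟩ := Metric.mem_closure_iff.1 hσ (min ρ (R / 2)) (by positivity)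
    rw [dist_comm] at hx
    have hxU : U x < U σ := by
      obtain ⟨x₀, -, rfl⟩ := hW
      exact connectedComponentIn_subset {x | U x < U σ} x₀ hxW
    have hseg : segment ℝ x (x + τ • v) ⊆ W := by
      refine comp_absorb hW (convex_segment _ _).isPreconnected ?_
        ⟨x, left_mem_segment _ _ _, hxW⟩
      rw [segment_eq_image']
      rintro _ ⟨θ, hθ, rfl⟩
      rcases hθ.1.eq_or_lt with rfl | h0
      · simpa using hxU
      · have := hdec x (hx.trans_le (min_le_right _ _)) (θ * τ) (by positivity)
          (lt_of_le_of_lt (by gcongr; exact mul_le_of_le_one_left hτ.le hθ.2) hτv)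
        simp only [add_sub_cancel_left, smul_smul, mem_ofPred_eq]
        exact this.trans hxU
    refine comp_absorb hW (convex_ball (σ + τ • v) ρ).isPreconnected hρU
      ⟨x + τ • v, ?_, hseg (right_mem_segment _ _ _)⟩ (mem_ball_self hρ)
    simpa using hx.trans_le (min_le_left _ _)
  exact disjoint_left.1 hdisj (key W₁ hW₁ h1) (key W₂ hW₂ h2)

/-! ### Strict sublevel sets near a nondegenerate critical point -/

/-- `N ⊕ Nᗮ` splits the space into descending and ascending directions at the critical point `σ`,
uniformly on the ball of radius `R`: the second derivative of `U` at each point of that ball is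
negative definite on `N` and positive semidefinite on `Nᗮ`. -/
structure LocalSplitting (U : E → ℝ) (σ : E) (N : Submodule ℝ E) (R : ℝ) : Prop where
  crit : fderiv ℝ U σ = 0
  neg : ∀ x ∈ ball σ R, ∀ a ∈ N, a ≠ 0 → fderiv ℝ (fderiv ℝ U) x a a < 0
  nonneg : ∀ x ∈ ball σ R, ∀ b ∈ Nᗮ, 0 ≤ fderiv ℝ (fderiv ℝ U) x b b

/-- The set `A(σ, r)`: the part of the punctured ball where `U` is smaller than at `σ`. -/
def puncturedSublevel (U : E → ℝ) (σ : E) (r : ℝ) : Set E :=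
  (ball σ r \ {σ}) ∩ {y | U y < U σ}

namespace LocalSplitting
variable {U : E → ℝ} {σ : E} {N : Submodule ℝ E} {R r : ℝ}

theorem add_smul_mem_ball {v : E} (hv : ‖v‖ < r) {s : ℝ} (hs : s ∈ Icc (0 : ℝ) 1) :
    σ + s • v ∈ ball σ r := by
  rw [mem_ball, dist_eq_norm, add_sub_cancel_left, norm_smul, Real.norm_of_nonneg hs.1]
  exact (mul_le_of_le_one_left (norm_nonneg v) hs.2).trans_lt hv

theorem lt_of_mem (h : LocalSplitting U σ N R) (hU : ContDiff ℝ 2 U) {a : E} (ha : a ∈ N)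
    (h0 : a ≠ 0) (haR : ‖a‖ < R) : U (σ + a) < U σ := by
  obtain ⟨ξ, hξ, η, hη, heq⟩ := taylor_two hU h.crit a
  have := h.neg _ (add_smul_mem_ball haR (Ioo_subset_Icc_self hη)) a ha h0
  nlinarith [hξ.1]

theorem le_of_mem_orthogonal (h : LocalSplitting U σ N R) (hU : ContDiff ℝ 2 U) {b : E}
    (hb : b ∈ Nᗮ) (hbR : ‖b‖ < R) : U σ ≤ U (σ + b) := by
  obtain ⟨ξ, hξ, η, hη, heq⟩ := taylor_two hU h.crit b
  have := h.nonneg _ (add_smul_mem_ball hbR (Ioo_subset_Icc_self hη)) b hb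
  nlinarith [hξ.1]

theorem add_mem_puncturedSublevel (h : LocalSplitting U σ N R) (hU : ContDiff ℝ 2 U) (hr : r ≤ R)
    {a : E} (ha : a ∈ N) (h0 : a ≠ 0) (har : ‖a‖ < r) : σ + a ∈ puncturedSublevel U σ r :=
  ⟨⟨by simpa [dist_eq_norm] using har, by simpa using h0⟩, h.lt_of_mem hU ha h0 (har.trans_le hr)⟩

variable [N.HasOrthogonalProjection]

theorem starProjection_ne_zero (h : LocalSplitting U σ N R) (hU : ContDiff ℝ 2 U) (hr : r ≤ R)
    {x : E} (hx : x ∈ puncturedSublevel U σ r) : N.starProjection (x - σ) ≠ 0 := by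
  intro h0
  have hb := N.sub_starProjection_mem_orthogonal (x - σ)
  rw [h0, sub_zero] at hb
  have hxr : ‖x - σ‖ < R := (mem_ball_iff_norm.1 hx.1.1).trans_le hr
  have := h.le_of_mem_orthogonal hU hb hxr
  rw [add_sub_cancel] at this
  exact absurd hx.2 (not_lt.2 this)

theorem norm_starProjection_lt {x : E} (hx : x ∈ ball σ r) :
    ‖N.starProjection (x - σ)‖ < r :=
  (N.norm_starProjection_apply_le _).trans_lt (mem_ball_iff_norm.1 hx)

/-- Deleting the `Nᗮ`-part of a point of `A(σ, r)` linearly stays inside `A(σ, r)`: the norm does not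
increase, the `N`-part stays nonzero, and `U` is convex along the way. -/
theorem segment_subset (h : LocalSplitting U σ N R) (hU : ContDiff ℝ 2 U) (hr : r ≤ R)
    {x : E} (hx : x ∈ puncturedSublevel U σ r) :
    segment ℝ (σ + N.starProjection (x - σ)) x ⊆ puncturedSublevel U σ r := by
  set a := N.starProjection (x - σ) with ha
  have haN : a ∈ N := N.starProjection_apply_mem _
  have hbN : x - (σ + a) ∈ Nᗮ := by
    rw [← sub_sub]; exact N.sub_starProjection_mem_orthogonal (x - σ)
  have ha0 : a ≠ 0 := h.starProjection_ne_zero hU hr hx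
  have har : ‖a‖ < r := norm_starProjection_lt hx.1.1
  have hball : segment ℝ (σ + a) x ⊆ ball σ r :=
    (convex_ball σ r).segment_subset (by simpa [dist_eq_norm] using har) hx.1.1
  intro y hy
  refine ⟨⟨hball hy, ?_⟩, ?_⟩
  · rintro rfl
    rw [segment_eq_image'] at hy
    obtain ⟨s, -, hs⟩ := hy
    have : N.starProjection (a + s • (x - (y + a))) = a := by
      rw [map_add, map_smul, Submodule.starProjection_eq_self_iff.2 haN,
        (Submodule.starProjection_apply_eq_zero_iff N).2 hbN, smul_zero, add_zero]
    simp only [add_assoc, add_eq_left] at hs this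
    rw [hs, map_zero] at this
    exact ha0 this.symm
  · rw [segment_eq_image'] at hy hball
    obtain ⟨s, hs, rfl⟩ := hy
    refine segment_sublevel hU (fun t ht => h.nonneg _ (ball_subset_ball hr (hball ⟨t, ht, rfl⟩))
      _ hbN) (h.lt_of_mem hU haN ha0 (har.trans_le hr)) ?_ s hs
    rw [add_sub_cancel]
    exact hx.2

/-- If `dim N ≥ 2` then `A(σ, r)` is connected: its core, the punctured ball of `σ + N`, is the image
of `(0, r)` times the unit sphere of `N`, and every point is joined to the core by a segment. -/
theorem preconnected_of_one_lt (h : LocalSplitting U σ N R) (hU : ContDiff ℝ 2 U) (hr : r ≤ R)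
    (hN : 1 < Module.rank ℝ N) : IsPreconnected (puncturedSublevel U σ r) := by
  have hcore : IsPreconnected ((fun p : ℝ × N => σ + p.1 • (p.2 : E)) ''
      (Ioo 0 r ×ˢ sphere (0 : N) 1)) :=
    (isPreconnected_Ioo.prod (isPreconnected_sphere hN 0 1)).image _ (by fun_prop)
  set K := (fun p : ℝ × N => σ + p.1 • (p.2 : E)) '' (Ioo 0 r ×ˢ sphere (0 : N) 1) with hK
  have hKsub : K ⊆ puncturedSublevel U σ r := by
    rintro _ ⟨⟨t, e⟩, ⟨ht, he⟩, rfl⟩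
    have he1 : ‖(e : E)‖ = 1 := by simpa using he
    refine h.add_mem_puncturedSublevel hU hr (N.smul_mem t e.2) ?_ ?_
    · refine smul_ne_zero ht.1.ne' ?_
      intro h0
      exact zero_ne_one ((norm_eq_zero.2 h0).symm.trans he1)
    · rw [norm_smul, he1, mul_one, Real.norm_of_nonneg ht.1.le]
      exact ht.2
  have hproj : ∀ x ∈ puncturedSublevel U σ r, σ + N.starProjection (x - σ) ∈ K := by
    intro x hx
    have h0 := h.starProjection_ne_zero hU hr hx
    set a := N.starProjection (x - σ) with ha
    have haN : a ∈ N := N.starProjection_apply_mem _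
    refine ⟨(‖a‖, ‖a‖⁻¹ • ⟨a, haN⟩), ⟨⟨norm_pos_iff.2 h0, norm_starProjection_lt hx.1.1⟩, ?_⟩, ?_⟩
    · have : ‖a‖ ≠ 0 := norm_ne_zero_iff.2 h0
      simp [norm_smul, this]
    · have : ‖a‖ ≠ 0 := norm_ne_zero_iff.2 h0
      simp [smul_smul, this]
  refine isPreconnected_of_forall_pair fun x hx y hy => ?_
  refine ⟨K ∪ segment ℝ (σ + N.starProjection (x - σ)) x ∪
    segment ℝ (σ + N.starProjection (y - σ)) y, ?_, ?_, ?_, ?_⟩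
  · exact union_subset (union_subset hKsub (h.segment_subset hU hr hx)) (h.segment_subset hU hr hy)
  · exact .inl (.inr (right_mem_segment _ _ _))
  · exact .inr (right_mem_segment _ _ _)
  · refine IsPreconnected.union _ (.inl (hproj y hy)) (left_mem_segment _ _ _) ?_
      (convex_segment _ _).isPreconnected
    exact IsPreconnected.union _ (hproj x hx) (left_mem_segment _ _ _) hcore
      (convex_segment _ _).isPreconnected

/-- The part of `A(σ, r)` on the side of `σ` to which `e` points. -/
def half (U : E → ℝ) (σ : E) (r : ℝ) (e : E) : Set E :=
  puncturedSublevel U σ r ∩ {x | 0 < inner ℝ e (x - σ)}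

theorem inner_starProjection {e x : E} (heN : e ∈ N) :
    inner ℝ e (N.starProjection x) = inner ℝ e x := by
  have := Submodule.inner_right_of_mem_orthogonal heN (N.sub_starProjection_mem_orthogonal x)
  rw [inner_sub_right] at this
  linarith

/-- If `N` is the line spanned by `e`, each half of `A(σ, r)` is connected, its core being the open
segment from `σ` to `σ + r • e`. -/
theorem half_preconnected (h : LocalSplitting U σ N R) (hU : ContDiff ℝ 2 U) (hr : r ≤ R)
    {e : E} (heN : e ∈ N) (he : ‖e‖ = 1) (hspan : ∀ a ∈ N, ∃ c : ℝ, c • e = a) :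
    IsPreconnected (half U σ r e) := by
  have hcore : IsPreconnected ((fun t : ℝ => σ + t • e) '' Ioo 0 r) :=
    isPreconnected_Ioo.image _ (by fun_prop)
  set K := (fun t : ℝ => σ + t • e) '' Ioo 0 r with hK
  have hKsub : K ⊆ half U σ r e := by
    rintro _ ⟨t, ht, rfl⟩
    refine ⟨h.add_mem_puncturedSublevel hU hr (N.smul_mem t heN) ?_ ?_, ?_⟩
    · exact smul_ne_zero ht.1.ne' (by rintro rfl; simp at he)
    · rw [norm_smul, he, mul_one, Real.norm_of_nonneg ht.1.le]
      exact ht.2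
    · simpa [inner_smul_right, he] using ht.1
  have hproj : ∀ x ∈ half U σ r e, σ + N.starProjection (x - σ) ∈ K := by
    intro x hx
    obtain ⟨c, hc⟩ := hspan _ (N.starProjection_apply_mem (x - σ))
    have h1 := hx.2
    have h2 := norm_starProjection_lt (N := N) hx.1.1.1
    rw [mem_ofPred_eq, ← inner_starProjection heN, ← hc, inner_smul_right,
      real_inner_self_eq_norm_sq, he, one_pow, mul_one] at h1
    rw [← hc, norm_smul, he, mul_one, Real.norm_of_nonneg h1.le] at h2
    exact ⟨c, ⟨h1, h2⟩, by simp only [hc]⟩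
  have hseg : ∀ x ∈ half U σ r e, segment ℝ (σ + N.starProjection (x - σ)) x ⊆ half U σ r e := by
    intro x hx y hy
    refine ⟨h.segment_subset hU hr hx.1 hy, ?_⟩
    have hconv : Convex ℝ {x : E | 0 < inner ℝ e (x - σ)} := by
      intro x hx y hy s t hs ht hst
      have : s • x + t • y - σ = s • (x - σ) + t • (y - σ) := by
        rw [smul_sub, smul_sub, sub_add_sub_comm, ← add_smul, hst, one_smul]
      rw [mem_ofPred_eq] at hx hy ⊢
      rw [this, inner_add_right, inner_smul_right, inner_smul_right]
      rcases hs.eq_or_lt with rfl | hs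
      · have : t = 1 := by linarith
        simpa [this] using hy
      · have := mul_pos hs hx
        have := mul_nonneg ht hy.le
        linarith
    exact hconv.segment_subset (hKsub (hproj x hx)).2 hx.2 hy
  refine isPreconnected_of_forall_pair fun x hx y hy => ?_
  refine ⟨K ∪ segment ℝ (σ + N.starProjection (x - σ)) x ∪
    segment ℝ (σ + N.starProjection (y - σ)) y, ?_, ?_, ?_, ?_⟩
  · exact union_subset (union_subset hKsub (hseg x hx)) (hseg y hy)
  · exact .inl (.inr (right_mem_segment _ _ _))
  · exact .inr (right_mem_segment _ _ _)
  · refine IsPreconnected.union _ (.inl (hproj y hy)) (left_mem_segment _ _ _) ?_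
      (convex_segment _ _).isPreconnected
    exact IsPreconnected.union _ (hproj x hx) (left_mem_segment _ _ _) hcore
      (convex_segment _ _).isPreconnected

theorem mem_half_or (h : LocalSplitting U σ N R) (hU : ContDiff ℝ 2 U) (hr : r ≤ R)
    {e : E} (heN : e ∈ N) (he : ‖e‖ = 1) (hspan : ∀ a ∈ N, ∃ c : ℝ, c • e = a) {x : E}
    (hx : x ∈ puncturedSublevel U σ r) : x ∈ half U σ r e ∨ x ∈ half U σ r (-e) := by
  obtain ⟨c, hc⟩ := hspan _ (N.starProjection_apply_mem (x - σ))
  have h0 := h.starProjection_ne_zero hU hr hx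
  have h1 : inner ℝ e (x - σ) = c := by
    rw [← inner_starProjection heN, ← hc, inner_smul_right, real_inner_self_eq_norm_sq, he]
    simp
  have hc0 : c ≠ 0 := by
    rintro rfl
    exact h0 (by rw [← hc, zero_smul])
  rcases lt_or_gt_of_ne hc0 with hlt | hgt
  · exact .inr ⟨hx, by simpa [h1] using hlt⟩
  · exact .inl ⟨hx, by simpa [h1] using hgt⟩

end LocalSplitting

/-! ### Components of the sublevel set meeting at a critical point -/

section components
variable {U : E → ℝ} {σ : E} {N : Submodule ℝ E} {R r : ℝ} {W W₁ W₂ : Set E}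

theorem sublevel_inter_nonempty {F : Type*} [NormedAddCommGroup F] {U : F → ℝ} {σ : F}
    {W : Set F} {r : ℝ}
    (hW : ∃ x₀ ∈ {x | U x < U σ}, W = connectedComponentIn {x | U x < U σ} x₀)
    (hσ : σ ∈ closure W) (hr : 0 < r) : (puncturedSublevel U σ r ∩ W).Nonempty := by
  obtain ⟨x, hxW, hx⟩ := Metric.mem_closure_iff.1 hσ r hr
  have hxU : U x < U σ := by
    obtain ⟨x₀, -, rfl⟩ := hW
    exact connectedComponentIn_subset {x | U x < U σ} x₀ hxW
  refine ⟨x, ⟨⟨by rwa [mem_ball, dist_comm], ?_⟩, hxU⟩, hxW⟩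
  rintro rfl
  exact lt_irrefl _ hxU

/-- The index of `σ` is one: index zero makes `A(σ, R)` empty, and index at least two makes it
connected, so that it cannot meet two components. -/
theorem finrank_eq_one_of_common [FiniteDimensional ℝ E] (h : LocalSplitting U σ N R)
    (hU : ContDiff ℝ 2 U) (hR : 0 < R)
    (hW₁ : ∃ x₀ ∈ {x | U x < U σ}, W₁ = connectedComponentIn {x | U x < U σ} x₀)
    (hW₂ : ∃ x₀ ∈ {x | U x < U σ}, W₂ = connectedComponentIn {x | U x < U σ} x₀)
    (hdisj : Disjoint W₁ W₂) (h1 : σ ∈ closure W₁) (h2 : σ ∈ closure W₂) :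
    Module.finrank ℝ N = 1 := by
  obtain ⟨x, hxA, hx⟩ := sublevel_inter_nonempty hW₁ h1 hR
  obtain ⟨y, hyA, hy⟩ := sublevel_inter_nonempty hW₂ h2 hR
  rcases lt_trichotomy (Module.finrank ℝ N) 1 with hlt | heq | hgt
  · have hbot : N = ⊥ := Submodule.finrank_eq_zero.1 (by omega)
    refine absurd ?_ (h.starProjection_ne_zero hU le_rfl hxA)
    have := N.starProjection_apply_mem (x - σ)
    rwa [hbot, Submodule.mem_bot, ← hbot] at this
  · exact heq
  · have hpre := h.preconnected_of_one_lt hU le_rfl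
      (by rw [← Module.finrank_eq_rank]; exact_mod_cast hgt)
    have hsub := comp_absorb hW₁ hpre (fun z hz => hz.2) ⟨x, hxA, hx⟩
    exact absurd hy (disjoint_left.1 hdisj (hsub hyA))

/-- If a component `W` of a larger set `F ⊇ T` cuts `T` in a connected set, this set is a component
of `T`. -/
theorem connectedComponentIn_eq_inter {X : Type*} [TopologicalSpace X] {F W T : Set X} {x : X}
    (hW : ∃ x₀ ∈ F, W = connectedComponentIn F x₀) (hT : T ⊆ F) (hpre : IsPreconnected (T ∩ W))
    (hx : x ∈ T ∩ W) : connectedComponentIn T x = T ∩ W := by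
  refine Subset.antisymm (subset_inter (connectedComponentIn_subset _ _) ?_)
    (hpre.subset_connectedComponentIn hx inter_subset_left)
  exact comp_absorb hW isPreconnected_connectedComponentIn
    ((connectedComponentIn_subset _ _).trans hT) ⟨x, mem_connectedComponentIn hx.1, hx.2⟩

/-- When `N` is a line, the two halves of `A(σ, r)` are its components: each is connected and lies
in one component of the sublevel set, and since both `W₁` and `W₂` meet `A(σ, r)`, one half lies
in `W₁` and the other in `W₂`. -/
theorem exactlyTwoComponents [FiniteDimensional ℝ E] (h : LocalSplitting U σ N R)
    (hU : ContDiff ℝ 2 U) (hr : 0 < r) (hrR : r ≤ R) (hN : Module.finrank ℝ N = 1)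
    (hW₁ : ∃ x₀ ∈ {x | U x < U σ}, W₁ = connectedComponentIn {x | U x < U σ} x₀)
    (hW₂ : ∃ x₀ ∈ {x | U x < U σ}, W₂ = connectedComponentIn {x | U x < U σ} x₀)
    (hdisj : Disjoint W₁ W₂) (h1 : σ ∈ closure W₁) (h2 : σ ∈ closure W₂) :
    ExactlyTwoComponents (puncturedSublevel U σ r) (puncturedSublevel U σ r ∩ W₁)
      (puncturedSublevel U σ r ∩ W₂) := by
  obtain ⟨x, hxA, hx⟩ := sublevel_inter_nonempty hW₁ h1 hr
  obtain ⟨y, hyA, hy⟩ := sublevel_inter_nonempty hW₂ h2 hr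
  obtain ⟨e, heN, he, hspan, hxe⟩ : ∃ e ∈ N, ‖e‖ = 1 ∧ (∀ a ∈ N, ∃ c : ℝ, c • e = a) ∧
      x ∈ LocalSplitting.half U σ r e := by
    obtain ⟨v, hv0, hv⟩ := finrank_eq_one_iff'.1 hN
    have hv' : ‖(v : E)‖ ≠ 0 := by simpa using hv0
    have heN : ‖(v : E)‖⁻¹ • (v : E) ∈ N := N.smul_mem _ v.2
    have he : ‖‖(v : E)‖⁻¹ • (v : E)‖ = 1 := by simp [norm_smul, hv0]
    have hspan : ∀ a ∈ N, ∃ c : ℝ, c • (‖(v : E)‖⁻¹ • (v : E)) = a := by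
      intro a ha
      obtain ⟨c, hc⟩ := hv ⟨a, ha⟩
      refine ⟨c * ‖(v : E)‖, ?_⟩
      rw [smul_smul, mul_inv_cancel_right₀ hv']
      exact congrArg Subtype.val hc
    -- orient the line so that the chosen point of `W₁` is on the positive side
    rcases h.mem_half_or hU hrR heN he hspan hxA with hp | hn
    · exact ⟨_, heN, he, hspan, hp⟩
    · refine ⟨_, N.neg_mem heN, by rwa [norm_neg], fun a ha => ?_, hn⟩
      obtain ⟨c, hc⟩ := hspan a ha
      exact ⟨-c, by rwa [neg_smul_neg]⟩
  have hpre1 := h.half_preconnected hU hrR heN he hspan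
  have hpre2 := h.half_preconnected hU hrR (N.neg_mem heN) (by rwa [norm_neg]) fun a ha => by
    obtain ⟨c, hc⟩ := hspan a ha
    exact ⟨-c, by rwa [neg_smul_neg]⟩
  have hsub1 : LocalSplitting.half U σ r e ⊆ W₁ := comp_absorb hW₁ hpre1 (fun z hz => hz.1.2) ⟨x, hxe, hx⟩
  have hye : y ∈ LocalSplitting.half U σ r (-e) := (h.mem_half_or hU hrR heN he hspan hyA).resolve_left
    fun hye => disjoint_left.1 hdisj (hsub1 hye) hy
  have hsub2 : LocalSplitting.half U σ r (-e) ⊆ W₂ := comp_absorb hW₂ hpre2 (fun z hz => hz.1.2) ⟨y, hye, hy⟩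
  have heq1 : puncturedSublevel U σ r ∩ W₁ = LocalSplitting.half U σ r e :=
    Subset.antisymm (fun z hz => (h.mem_half_or hU hrR heN he hspan hz.1).resolve_right
      fun hz' => disjoint_left.1 hdisj hz.2 (hsub2 hz')) fun z hz => ⟨hz.1, hsub1 hz⟩
  have heq2 : puncturedSublevel U σ r ∩ W₂ = LocalSplitting.half U σ r (-e) :=
    Subset.antisymm (fun z hz => (h.mem_half_or hU hrR heN he hspan hz.1).resolve_left
      fun hz' => disjoint_left.1 hdisj (hsub1 hz') hz.2) fun z hz => ⟨hz.1, hsub2 hz⟩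
  have hcomp1 : ∀ z ∈ puncturedSublevel U σ r ∩ W₁,
      connectedComponentIn (puncturedSublevel U σ r) z = puncturedSublevel U σ r ∩ W₁ :=
    fun z hz => connectedComponentIn_eq_inter hW₁ (fun _ h => h.2) (heq1 ▸ hpre1) hz
  have hcomp2 : ∀ z ∈ puncturedSublevel U σ r ∩ W₂,
      connectedComponentIn (puncturedSublevel U σ r) z = puncturedSublevel U σ r ∩ W₂ :=
    fun z hz => connectedComponentIn_eq_inter hW₂ (fun _ h => h.2) (heq2 ▸ hpre2) hz
  refine ⟨⟨x, hxA, hx⟩, ⟨y, hyA, hy⟩, fun heq => ?_, hcomp1, hcomp2, fun z hz => ?_⟩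
  · have hx2 : x ∈ puncturedSublevel U σ r ∩ W₂ := heq ▸ ⟨hxA, hx⟩
    exact disjoint_left.1 hdisj hx hx2.2
  · rcases h.mem_half_or hU hrR heN he hspan hz with hz' | hz'
    · exact .inl (hcomp1 z ⟨hz, hsub1 hz'⟩)
    · exact .inr (hcomp2 z ⟨hz, hsub2 hz'⟩)
end components
end

/-! ### The splitting given by the Hessian matrix -/

section hessian
variable {d : ℕ} {U : EuclideanSpace ℝ (Fin d) → ℝ} {σ : EuclideanSpace ℝ (Fin d)}

theorem hessianMatrix_apply (i j : Fin d) : hessianMatrix U σ i j =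
    fderiv ℝ (fderiv ℝ U) σ (EuclideanSpace.single i 1) (EuclideanSpace.single j 1) := by
  rw [hessianMatrix, iteratedFDeriv_two_apply]
  simp

theorem hessianMatrix_isHermitian (hU : ContDiff ℝ 2 U) : (hessianMatrix U σ).IsHermitian := by
  ext i j
  rw [Matrix.conjTranspose_apply, hessianMatrix_apply, hessianMatrix_apply, star_trivial]
  exact (hU.contDiffAt.isSymmSndFDerivAt (by simp)) _ _

theorem snd_fderiv_eq_inner (x : EuclideanSpace ℝ (Fin d)) :
    fderiv ℝ (fderiv ℝ U) σ x x =
      inner ℝ x (Matrix.toEuclideanLin (hessianMatrix U σ) x) := by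
  have hx : x = ∑ i, x i • EuclideanSpace.single i (1 : ℝ) := by
    simpa using ((EuclideanSpace.basisFun (Fin d) ℝ).sum_repr x).symm
  have h1 : fderiv ℝ (fderiv ℝ U) σ x x = ∑ i, ∑ j, x i * (x j * hessianMatrix U σ i j) := by
    conv_lhs => rw [hx]
    simp only [map_sum, map_smul, sum_apply, smul_apply,
      smul_eq_mul, hessianMatrix_apply, Finset.mul_sum]
    rw [Finset.sum_comm]
    exact Finset.sum_congr rfl fun i _ => Finset.sum_congr rfl fun j _ => by ring
  rw [h1, PiLp.inner_apply]
  refine Finset.sum_congr rfl fun i _ => ?_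
  simp only [Matrix.toLpLin_apply, Matrix.mulVec, dotProduct, RCLike.inner_apply, conj_trivial,
    Finset.sum_mul]
  exact Finset.sum_congr rfl fun j _ => by ring

/-- The second derivative as a quadratic form is diagonal in the eigenbasis of the Hessian matrix. -/
theorem snd_fderiv_eq_sum (h : (hessianMatrix U σ).IsHermitian) (x : EuclideanSpace ℝ (Fin d)) :
    fderiv ℝ (fderiv ℝ U) σ x x =
      ∑ i, h.eigenvalues i * inner ℝ (h.eigenvectorBasis i) x ^ 2 := by
  rw [snd_fderiv_eq_inner, ← h.eigenvectorBasis.sum_inner_mul_inner]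
  refine Finset.sum_congr rfl fun i _ => ?_
  have hv : Matrix.toEuclideanLin (hessianMatrix U σ) (h.eigenvectorBasis i) =
      h.eigenvalues i • h.eigenvectorBasis i := by
    rw [Matrix.toLpLin_apply, h.mulVec_eigenvectorBasis]
    rfl
  rw [← Matrix.isSymmetric_toEuclideanLin_iff.2 h, hv, inner_smul_left, real_inner_comm]
  simp only [conj_trivial]
  ring

/-- The span of the eigenvectors of the Hessian matrix with negative eigenvalue. -/
def negEigenspace (h : (hessianMatrix U σ).IsHermitian) :
    Submodule ℝ (EuclideanSpace ℝ (Fin d)) :=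
  Submodule.span ℝ (range fun i : {i // h.eigenvalues i < 0} => h.eigenvectorBasis i)

theorem finrank_negEigenspace (h : (hessianMatrix U σ).IsHermitian) :
    Module.finrank ℝ (negEigenspace h) =
      (Finset.univ.filter fun i => h.eigenvalues i < 0).card := by
  rw [negEigenspace, finrank_span_eq_card, Fintype.card_subtype]
  exact (h.eigenvectorBasis.orthonormal.linearIndependent).comp _ Subtype.val_injective

/-- Nondegeneracy makes the quadratic form uniformly definite on the two summands; the constant is
the least absolute value of an eigenvalue. -/
theorem exists_definite_bounds (hd : 1 ≤ d) (hunit : IsUnit (hessianMatrix U σ))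
    (h : (hessianMatrix U σ).IsHermitian) : ∃ c > (0 : ℝ),
      (∀ a ∈ negEigenspace h, fderiv ℝ (fderiv ℝ U) σ a a ≤ -c * ‖a‖ ^ 2) ∧
      ∀ b ∈ (negEigenspace h)ᗮ, c * ‖b‖ ^ 2 ≤ fderiv ℝ (fderiv ℝ U) σ b b := by
  have : Nonempty (Fin d) := ⟨⟨0, hd⟩⟩
  have hne : ∀ i, h.eigenvalues i ≠ 0 := by
    intro i hi
    have hdet := ((Matrix.isUnit_iff_isUnit_det _).1 hunit).ne_zero
    rw [h.det_eq_prod_eigenvalues] at hdet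
    exact Finset.prod_ne_zero_iff.1 hdet i (Finset.mem_univ i) (by simp [hi])
  obtain ⟨i₀, hi₀⟩ := Finite.exists_min fun i => |h.eigenvalues i|
  refine ⟨|h.eigenvalues i₀|, abs_pos.2 (hne i₀), fun a ha => ?_, fun b hb => ?_⟩
  · have hz : ∀ i, 0 < h.eigenvalues i → inner ℝ (h.eigenvectorBasis i) a = 0 := by
      intro i hi
      refine Submodule.span_induction ?_ (inner_zero_right _) ?_ ?_ ha
      · rintro _ ⟨j, rfl⟩
        refine h.eigenvectorBasis.orthonormal.2 ?_
        rintro rfl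
        exact lt_asymm hi j.2
      · intro x y _ _ hx hy
        rw [inner_add_right, hx, hy, add_zero]
      · intro t x _ hx
        rw [inner_smul_right, hx, mul_zero]
    rw [snd_fderiv_eq_sum h, ← h.eigenvectorBasis.sum_sq_inner_right, Finset.mul_sum]
    refine Finset.sum_le_sum fun i _ => ?_
    rcases lt_or_gt_of_ne (hne i) with hi | hi
    · have := hi₀ i
      simp only [abs_of_neg hi] at this
      exact mul_le_mul_of_nonneg_right (by linarith) (sq_nonneg _)
    · simp [hz i hi]
  · have hz : ∀ i, h.eigenvalues i < 0 → inner ℝ (h.eigenvectorBasis i) b = 0 := fun i hi =>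
      Submodule.inner_right_of_mem_orthogonal (Submodule.subset_span
        (mem_range_self (⟨i, hi⟩ : {i // h.eigenvalues i < 0}))) hb
    rw [snd_fderiv_eq_sum h, ← h.eigenvectorBasis.sum_sq_inner_right, Finset.mul_sum]
    refine Finset.sum_le_sum fun i _ => ?_
    rcases lt_or_gt_of_ne (hne i) with hi | hi
    · simp [hz i hi]
    · have := hi₀ i
      simp only [abs_of_pos hi] at this
      exact mul_le_mul_of_nonneg_right this (sq_nonneg _)

/-- A nondegenerate critical point has a local splitting: the definite bounds on the second
derivative at `σ` persist nearby by continuity. -/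
theorem exists_localSplitting (hd : 1 ≤ d) (hU : ContDiff ℝ 2 U) (hcrit : fderiv ℝ U σ = 0)
    (hunit : IsUnit (hessianMatrix U σ)) (h : (hessianMatrix U σ).IsHermitian) :
    ∃ R > 0, LocalSplitting U σ (negEigenspace h) R := by
  obtain ⟨c, hc, hneg, hpos⟩ := exists_definite_bounds hd hunit h
  obtain ⟨R, hR, hclose⟩ := exists_snd_fderiv_close hU σ hc
  refine ⟨R, hR, hcrit, fun x hx a ha h0 => ?_, fun x hx b hb => ?_⟩
  · have := (abs_lt.1 (hclose x hx a h0)).2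
    linarith [hneg a ha]
  · by_cases h0 : b = 0
    · simp [h0]
    · have := (abs_lt.1 (hclose x hx b h0)).1
      linarith [hpos b hb]
end hessian

/-- Let `U` be `C³` with all critical points nondegenerate, and let `W₁, W₂`
be disjoint connected components of `{U < H}` with intersecting closures.  Then
`cl W₁ ∩ cl W₂ = ∂W₁ ∩ ∂W₂`, every `σ` in this set is a saddle point with `U σ = H`, and for
all sufficiently small `r > 0` the set `A(σ, r)` has exactly two connected components, namely
`A(σ, r) ∩ W₁` and `A(σ, r) ∩ W₂`. -/
theorem common_boundary_points_are_saddles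
    (d : ℕ) (hd : 1 ≤ d) (U : EuclideanSpace ℝ (Fin d) → ℝ)
    (hU : ContDiff ℝ 3 U)
    (hnd : ∀ x, gradient U x = 0 → IsUnit (hessianMatrix U x))
    (H : ℝ) (W₁ W₂ : Set (EuclideanSpace ℝ (Fin d)))
    (hW₁ : ∃ x₀ ∈ {x | U x < H}, W₁ = connectedComponentIn {x | U x < H} x₀)
    (hW₂ : ∃ x₀ ∈ {x | U x < H}, W₂ = connectedComponentIn {x | U x < H} x₀)
    (hdisj : Disjoint W₁ W₂)
    (hmeet : (closure W₁ ∩ closure W₂).Nonempty) :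
    closure W₁ ∩ closure W₂ = frontier W₁ ∩ frontier W₂ ∧
    ∀ σ ∈ closure W₁ ∩ closure W₂,
      IsSaddle U σ ∧ U σ = H ∧
      ∃ r₀ > (0 : ℝ), ∀ r : ℝ, 0 < r → r ≤ r₀ →
        ExactlyTwoComponents
          ((Metric.ball σ r \ {σ}) ∩ {y | U y < U σ})
          (((Metric.ball σ r \ {σ}) ∩ {y | U y < U σ}) ∩ W₁)
          (((Metric.ball σ r \ {σ}) ∩ {y | U y < U σ}) ∩ W₂) := by
  
  have hU2 : ContDiff ℝ 2 U := hU.of_le (by norm_num)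
  have hF : IsOpen {x | U x < H} := isOpen_lt hU.continuous continuous_const
  have hopen : ∀ W : Set (EuclideanSpace ℝ (Fin d)),
      (∃ x₀ ∈ {x | U x < H}, W = connectedComponentIn {x | U x < H} x₀) → IsOpen W := by
    rintro _ ⟨x₀, -, rfl⟩
    exact hF.connectedComponentIn
  have hle : ∀ W : Set (EuclideanSpace ℝ (Fin d)),
      (∃ x₀ ∈ {x | U x < H}, W = connectedComponentIn {x | U x < H} x₀) →
      ∀ σ ∈ closure W, U σ ≤ H := by
    rintro _ ⟨x₀, -, rfl⟩ σ hσ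
    exact closure_minimal (fun x hx => le_of_lt (connectedComponentIn_subset {x | U x < H} x₀ hx))
      (isClosed_le hU.continuous continuous_const) hσ
  have hlevel : ∀ σ ∈ closure W₁ ∩ closure W₂, U σ = H := by
    rintro σ ⟨h1, h2⟩
    refine (hle W₁ hW₁ σ h1).antisymm (not_lt.1 fun hlt => ?_)
    obtain ⟨ε, hε, hball⟩ := Metric.isOpen_iff.1 hF σ hlt
    have hmem : ∀ W : Set (EuclideanSpace ℝ (Fin d)),
        (∃ x₀ ∈ {x | U x < H}, W = connectedComponentIn {x | U x < H} x₀) →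
        σ ∈ closure W → σ ∈ W := by
      intro W hW hσ
      obtain ⟨x, hxW, hx⟩ := Metric.mem_closure_iff.1 hσ ε hε
      exact comp_absorb hW (convex_ball σ ε).isPreconnected hball
        ⟨x, by rwa [mem_ball, dist_comm], hxW⟩ (mem_ball_self hε)
    exact disjoint_left.1 hdisj (hmem W₁ hW₁ h1) (hmem W₂ hW₂ h2)
  have hnot : ∀ W : Set (EuclideanSpace ℝ (Fin d)),
      (∃ x₀ ∈ {x | U x < H}, W = connectedComponentIn {x | U x < H} x₀) →
      ∀ σ, U σ = H → σ ∉ W := by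
    rintro _ ⟨x₀, -, rfl⟩ σ hσ hmem
    exact absurd hσ (ne_of_lt (connectedComponentIn_subset {x | U x < H} x₀ hmem))
  refine ⟨Subset.antisymm (fun σ hσ => ?_)
    (inter_subset_inter frontier_subset_closure frontier_subset_closure), fun σ hσ => ?_⟩
  · rw [(hopen W₁ hW₁).frontier_eq, (hopen W₂ hW₂).frontier_eq]
    exact ⟨⟨hσ.1, hnot W₁ hW₁ σ (hlevel σ hσ)⟩, hσ.2, hnot W₂ hW₂ σ (hlevel σ hσ)⟩
  · have hH := hlevel σ hσ
    subst hH
    have hcrit := fderiv_eq_zero_of_common hU2 hW₁ hW₂ hdisj hσ.1 hσ.2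
    have hgrad : gradient U σ = 0 := by rw [gradient, hcrit, map_zero]
    have hherm := hessianMatrix_isHermitian (σ := σ) hU2
    obtain ⟨R, hR, hsplit⟩ := exists_localSplitting hd hU2 hcrit (hnd σ hgrad) hherm
    have hN := finrank_eq_one_of_common hsplit hU2 hR hW₁ hW₂ hdisj hσ.1 hσ.2
    refine ⟨⟨hgrad, hnd σ hgrad, hherm, ?_⟩, rfl, R, hR, fun r hr hrR => ?_⟩
    · rw [← finrank_negEigenspace, hN]
    · exact exactlyTwoComponents hsplit hU2 hr hrR hN hW₁ hW₂ hdisj hσ.1 hσ.2
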